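/- There exists an absolute constant c > 0 such that for all real numbers α ≥ β ≥ 2 and r ≥ s > −1 and all integers n ≥ (2α+r+1)² and m ≥ (α+β)², one has K_m^{(α,β)}(1) · ∫_{−1}^1 |p_n^{(α+r+1, β−1)}(x)/p_n^{(α+r+1, β−1)}(1)|² (1−x)^{s+α} (1+x)^β dx ≤ c · e^{2r−2s} · 2^s · (m/n)^{2α+2s+2} · m^{−2s} · (Γ(α+r+2)² / (Γ(α+1)Γ(α+2))) · (α+r+2)^{2s−2r−2/3}. -/

import Mathlib

noncomputable section

open MeasureTheory Real Set
open scoped RealInnerProductSpace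

/-- Value at `x` of the orthonormalized Jacobi polynomial `p_n^{(α,β)}`. -/
def jacobiP (α β : ℝ) (n : ℕ) (x : ℝ) : ℝ :=
  Real.sqrt ((2 * (n : ℝ) + α + β + 1) / 2 ^ (α + β + 1) *
      (Real.Gamma ((n : ℝ) + α + β + 1) * (n.factorial : ℝ) /
        (Real.Gamma ((n : ℝ) + α + 1) * Real.Gamma ((n : ℝ) + β + 1)))) *
    (Real.Gamma (α + n + 1) / ((n.factorial : ℝ) * Real.Gamma (α + β + n + 1))) *
    ∑ m ∈ Finset.range (n + 1),
      (n.choose m : ℝ) * (Real.Gamma (α + β + n + m + 1) / Real.Gamma (α + m + 1)) *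
        ((x - 1) / 2) ^ m

/-- The kernel `K_n^{(α,β)}(x) = Σ_{ℓ<n} p_ℓ^{(α,β)}(1) p_ℓ^{(α,β)}(x)`. -/
def jacobiK (α β : ℝ) (n : ℕ) (x : ℝ) : ℝ :=
  ∑ ℓ ∈ Finset.range n, jacobiP α β ℓ 1 * jacobiP α β ℓ x

/-- The unit sphere `S^d ⊂ ℝ^{d+1}`. -/
abbrev Sph (d : ℕ) := Metric.sphere (0 : EuclideanSpace ℝ (Fin (d + 1))) 1

/-- The rotation invariant Riemannian volume probability measure `μ_d^*` on `S^d`. -/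
def sphMeasure (d : ℕ) : Measure (Sph d) :=
  ((volume : Measure (EuclideanSpace ℝ (Fin (d + 1)))).toSphere Set.univ)⁻¹ •
    (volume : Measure (EuclideanSpace ℝ (Fin (d + 1)))).toSphere

/-- `f : S^d → ℝ` is the restriction to the sphere of an algebraic polynomial in `d+1`
variables of total degree `< n`, i.e. `f ∈ Π_n^d`. -/
def IsSphPoly (d : ℕ) (n : ℝ) (f : Sph d → ℝ) : Prop :=
  ∃ p : MvPolynomial (Fin (d + 1)) ℝ, (p.totalDegree : ℝ) < n ∧
    ∀ y : Sph d, f y = MvPolynomial.eval (fun i => (y : EuclideanSpace ℝ (Fin (d + 1))) i) p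

/-- Integral of `f` with respect to a signed measure (via the Jordan decomposition). -/
def sInt {X : Type*} [MeasurableSpace X] (ν : SignedMeasure X) (f : X → ℝ) : ℝ :=
  (∫ x, f x ∂ν.toJordanDecomposition.posPart) - ∫ x, f x ∂ν.toJordanDecomposition.negPart

/-- Integral of `f` over a set `s` with respect to a signed measure. -/
def sIntOn {X : Type*} [MeasurableSpace X] (ν : SignedMeasure X) (s : Set X) (f : X → ℝ) : ℝ :=
  (∫ x in s, f x ∂ν.toJordanDecomposition.posPart) -
    ∫ x in s, f x ∂ν.toJordanDecomposition.negPart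

/-- `ν` is a quadrature measure of order `n` on `S^d`. -/
def IsQuadrature (d : ℕ) (n : ℝ) (ν : SignedMeasure (Sph d)) : Prop :=
  ∀ f : Sph d → ℝ, IsSphPoly d n f → sInt ν f = ∫ y, f y ∂sphMeasure d

/-- `ν` satisfies the Marcinkiewicz-Zygmund inequality of order `n` with constant `c`;
`ν ∈ MZ(d;n)` means this holds for some `c`, and `|||ν|||_{d;n}` is the least such `c`. -/
def IsMZ (d : ℕ) (n : ℝ) (ν : SignedMeasure (Sph d)) (c : ℝ) : Prop :=
  ∀ f : Sph d → ℝ, IsSphPoly d (n / 2) f →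
    (∫ y, (f y) ^ 2 ∂ν.totalVariation) ≤ c * ∫ y, (f y) ^ 2 ∂sphMeasure d

/-- `ω_d`, the volume of `S^d`. -/
def omegaS (d : ℕ) : ℝ := 2 * Real.pi ^ (((d : ℝ) + 1) / 2) / Real.Gamma (((d : ℝ) + 1) / 2)

/-- The reproducing kernel `K_{d;n}` of `Π_n^d`. -/
def sphK (d n : ℕ) (x : ℝ) : ℝ :=
  (omegaS d / omegaS (d - 1)) * jacobiK ((d : ℝ) / 2 - 1) ((d : ℝ) / 2 - 1) n x

/-- The kernel `Φ̃_{d;n,r}`. -/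
def PhiTilde (d n : ℕ) (r : ℝ) (x : ℝ) : ℝ :=
  sphK d ((d + 2) * n) x *
    (jacobiP ((d : ℝ) / 2 + r) ((d : ℝ) / 2 - 2) (d * n) x /
      jacobiP ((d : ℝ) / 2 + r) ((d : ℝ) / 2 - 2) (d * n) 1)

/-- The kernel `Φ_{d;n,r}`. -/
def Phi (d n : ℕ) (r : ℝ) (x : ℝ) : ℝ := PhiTilde d n r x * ((1 + x) / 2) ^ n

/-- The inner product `x·y` of two points of `S^d`. -/
def ip {d : ℕ} (x y : Sph d) : ℝ :=
  ⟪(x : EuclideanSpace ℝ (Fin (d + 1))), (y : EuclideanSpace ℝ (Fin (d + 1)))⟫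

/-- The operator `σ_{d;n,r}(ν, f)`. -/
def sigmaOp (d n : ℕ) (r : ℝ) (ν : SignedMeasure (Sph d)) (f : Sph d → ℝ) (x : Sph d) : ℝ :=
  sInt ν (fun y => f y * Phi d n r (ip x y))

/-- The operator `σ̃_{d;n,r}(ν, f)`. -/
def sigmaTildeOp (d n : ℕ) (r : ℝ) (ν : SignedMeasure (Sph d)) (f : Sph d → ℝ) (x : Sph d) : ℝ :=
  sInt ν (fun y => f y * PhiTilde d n r (ip x y))

/-- The uniform (supremum) norm `‖f‖_∞`. -/
def supNorm {X : Type*} (f : X → ℝ) : ℝ := sSup (Set.range fun x => |f x|)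

/-- `E_{d;n}(f)`, the degree of approximation of `f` from `Π_n^d` in the uniform norm. -/
def bestApprox (d : ℕ) (n : ℝ) (f : Sph d → ℝ) : ℝ :=
  sInf {t | ∃ g, IsSphPoly d n g ∧ ∀ y, |f y - g y| ≤ t}

/-- `dim Π_n^d = (2n+d−2)·Γ(n+d−1)/(Γ(n)·Γ(d+1))` (for `n ≥ 2`). -/
def dimPi (d n : ℕ) : ℝ :=
  (2 * (n : ℝ) + d - 2) * Real.Gamma ((n : ℝ) + d - 1) /
    (Real.Gamma n * Real.Gamma ((d : ℝ) + 1))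


lemma altsum_eq (n : ℕ) (f : ℝ → ℝ) (y : ℝ) :
    ∑ j ∈ Finset.range (n + 1), (-1 : ℝ) ^ j * (n.choose j : ℝ) * f (y + j) =
      (-1) ^ n * ((fwdDiff (1:ℝ))^[n] f) y := by
  rw [fwdDiff_iter_eq_sum_shift, Finset.mul_sum]
  refine Finset.sum_congr rfl fun j hj => ?_
  have hj' : j ≤ n := Nat.lt_succ_iff.mp (Finset.mem_range.mp hj)
  have h1 : (-1 : ℝ) ^ n * (-1) ^ (n - j) = (-1) ^ j := by
    obtain ⟨k, rfl⟩ := Nat.exists_eq_add_of_le hj'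
    rw [Nat.add_sub_cancel_left, pow_add, mul_assoc, ← pow_add, ← two_mul, pow_mul]
    simp
  simp only [zsmul_eq_mul, nsmul_eq_mul, mul_one]
  push_cast
  rw [← h1]
  ring

lemma altsum_poly {n : ℕ} {P : Polynomial ℝ} (hP : P.natDegree < n) :
    ∑ j ∈ Finset.range (n + 1), (-1 : ℝ) ^ j * (n.choose j : ℝ) * P.eval (j : ℝ) = 0 := by
  have := altsum_eq n (fun x => P.eval x) 0
  simp only [zero_add] at this
  rw [this]
  have h2 := Polynomial.fwdDiff_iter_eq_zero_of_degree_lt hP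
  have h3 : ((fwdDiff (1:ℝ))^[n] (fun x => P.eval x)) 0 = 0 := by
    simpa using congrFun h2 0
  rw [h3, mul_zero]

lemma fwdDiff_inv (n : ℕ) : ∀ x : ℝ, 0 < x → ((fwdDiff (1:ℝ))^[n] (fun x => 1 / x)) x =
    (-1) ^ n * (n.factorial * Gamma x / Gamma (x + n + 1)) := by
  induction n with
  | zero =>
    intro x hx
    have := (Gamma_pos_of_pos hx).ne'
    simp [Gamma_add_one hx.ne']
    field_simp
  | succ n ih =>
    intro x hx
    rw [Function.iterate_succ_apply', fwdDiff, ih x hx, ih (x+1) (by linarith)]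
    have h0 := (Gamma_pos_of_pos hx).ne'
    have h1 : 0 < x + n + 1 := by positivity
    have h1' := (Gamma_pos_of_pos h1).ne'
    rw [show x + 1 + (n:ℝ) + 1 = (x + n + 1) + 1 by ring, Gamma_add_one h1.ne', Gamma_add_one hx.ne',
      Nat.factorial_succ, show x + ((n+1 : ℕ):ℝ) + 1 = (x + n + 1) + 1 by push_cast; ring, Gamma_add_one h1.ne']
    push_cast
    field_simp
    ring

lemma altsum_inv (n : ℕ) {A : ℝ} (hA : 0 < A) :
    ∑ j ∈ Finset.range (n + 1), (-1 : ℝ) ^ j * (n.choose j : ℝ) * (1 / (A + j)) =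
      n.factorial * Gamma A / Gamma (A + n + 1) := by
  rw [altsum_eq n (fun x => 1 / x) A, fwdDiff_inv n A hA, ← mul_assoc, ← mul_pow]
  simp

lemma Gamma_add_nat_eq (k : ℕ) {x : ℝ} (hx : 0 < x) :
    Gamma (x + k) = (ascPochhammer ℝ k).eval x * Gamma x := by
  induction k with
  | zero => simp
  | succ k ih =>
    have h1 : 0 < x + k := by positivity
    rw [show x + ((k + 1 : ℕ):ℝ) = (x + k) + 1 by push_cast; ring, Gamma_add_one h1.ne', ih,
      ascPochhammer_succ_eval]
    ring

lemma beta_real {a b : ℝ} (ha : 0 < a) (hb : 0 < b) :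
    ∫ t in (0:ℝ)..1, t ^ (a - 1) * (1 - t) ^ (b - 1) = Gamma a * Gamma b / Gamma (a + b) := by
  have h1 : (∫ t in (0:ℝ)..1, ((t ^ (a - 1) * (1 - t) ^ (b - 1) : ℝ) : ℂ)) =
      Complex.betaIntegral a b := by
    rw [Complex.betaIntegral]
    refine intervalIntegral.integral_congr fun t ht => ?_
    rw [uIcc_of_le zero_le_one] at ht
    rw [Complex.ofReal_mul, Complex.ofReal_cpow ht.1, Complex.ofReal_cpow (by linarith [ht.2])]
    push_cast
    rfl
  rw [intervalIntegral.integral_ofReal] at h1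
  have h2 := ProbabilityTheory.beta_eq_betaIntegralReal a b ha hb
  rw [← h1, Complex.ofReal_re] at h2
  rw [← h2, ProbabilityTheory.beta]

/-- altsum kill for 1 ≤ k ≤ n -/
lemma altsum_kill {n k : ℕ} (hk : 1 ≤ k) (hkn : k ≤ n) {A c : ℝ} (hA : 0 < A) (hc : 0 < c) :
    ∑ j ∈ Finset.range (n + 1), (-1 : ℝ) ^ j * (n.choose j : ℝ) *
      (Gamma (c + n + j) / Gamma (A + 1 + j) * (Gamma (A + k + j) / Gamma (c + k + j))) = 0 := by
  obtain ⟨k, rfl⟩ := Nat.exists_eq_add_of_le' hk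
  obtain ⟨l, rfl⟩ := Nat.exists_eq_add_of_le hkn
  set P : Polynomial ℝ := (ascPochhammer ℝ k).comp (Polynomial.X + Polynomial.C (A + 1)) *
    (ascPochhammer ℝ l).comp (Polynomial.X + Polynomial.C (c + ((k + 1 : ℕ) : ℝ))) with hP
  have hdeg : P.natDegree < k + 1 + l := by
    refine lt_of_le_of_lt Polynomial.natDegree_mul_le ?_
    rw [Polynomial.natDegree_comp, Polynomial.natDegree_comp, Polynomial.natDegree_X_add_C,
      Polynomial.natDegree_X_add_C, ascPochhammer_natDegree, ascPochhammer_natDegree]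
    omega
  rw [← altsum_poly hdeg]
  refine Finset.sum_congr rfl fun j _ => ?_
  congr 1
  have e1 : 0 < A + 1 + j := by positivity
  have e2 : 0 < c + ((k + 1 : ℕ) : ℝ) + j := by positivity
  have g1 := (Gamma_pos_of_pos e1).ne'
  have g2 := (Gamma_pos_of_pos e2).ne'
  rw [show c + ((k + 1 + l : ℕ) : ℝ) + j = (c + ((k + 1 : ℕ) : ℝ) + j) + (l : ℝ) by push_cast; ring,
    Gamma_add_nat_eq l e2, show A + ((k + 1 : ℕ) : ℝ) + j = A + 1 + j + (k:ℝ) by push_cast; ring,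
    Gamma_add_nat_eq k e1, hP]
  simp only [Polynomial.eval_mul, Polynomial.eval_comp, Polynomial.eval_add, Polynomial.eval_X,
    Polynomial.eval_C]
  rw [show (j:ℝ) + (A + 1) = A + 1 + j by ring, show (j:ℝ) + (c + ((k + 1 : ℕ) : ℝ)) = c + ((k + 1 : ℕ) : ℝ) + j by ring]
  field_simp

lemma altsum_zero {n : ℕ} (hn : 1 ≤ n) {A B : ℝ} (hA : 0 < A) (hB : 0 < B) :
    ∑ j ∈ Finset.range (n + 1), (-1 : ℝ) ^ j * (n.choose j : ℝ) *
      (Gamma (A + B + 1 + n + j) / Gamma (A + 1 + j) * (Gamma (A + j) / Gamma (A + B + 1 + j))) =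
     Gamma (B + 1 + n) / Gamma (B + 1) * (n.factorial * Gamma A / Gamma (A + n + 1)) := by
  set P : Polynomial ℝ := (ascPochhammer ℝ n).comp (Polynomial.X + Polynomial.C (A + B + 1)) with hP
  set h : Polynomial ℝ := P /ₘ (Polynomial.X - Polynomial.C (-A)) with hh
  have hPd : P.natDegree = n := by
    rw [hP, Polynomial.natDegree_comp, Polynomial.natDegree_X_add_C, ascPochhammer_natDegree, mul_one]
  have hdeg : h.natDegree < n := by
    rw [hh, Polynomial.natDegree_divByMonic _ (Polynomial.monic_X_sub_C _), Polynomial.natDegree_X_sub_C, hPd]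
    omega
  have hdiv : ∀ x : ℝ, P.eval x = P.eval (-A) + (A + x) * h.eval x := by
    intro x
    have := Polynomial.modByMonic_add_div P (Polynomial.X - Polynomial.C (-A))
    rw [Polynomial.modByMonic_X_sub_C_eq_C_eval] at this
    conv_lhs => rw [← this]
    simp [hh]
    left; ring
  have hg : P.eval (-A) = Gamma (B + 1 + n) / Gamma (B + 1) := by
    rw [Gamma_add_nat_eq n (by linarith : 0 < B + 1), hP]
    have := (Gamma_pos_of_pos (by linarith : 0 < B + 1)).ne'
    simp only [Polynomial.eval_comp, Polynomial.eval_add, Polynomial.eval_X, Polynomial.eval_C]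
    rw [show -A + (A + B + 1) = B + 1 by ring]
    field_simp
  rw [← hg, ← altsum_inv n hA, Finset.mul_sum, ← add_zero (∑ i ∈ Finset.range (n + 1), P.eval (-A) * _),
    ← altsum_poly hdeg, ← Finset.sum_add_distrib]
  refine Finset.sum_congr rfl fun j _ => ?_
  have e1 : 0 < A + j := by positivity
  have e2 : 0 < A + B + 1 + j := by positivity
  have g1 := (Gamma_pos_of_pos e1).ne'
  have g2 := (Gamma_pos_of_pos e2).ne'
  have hx : (ascPochhammer ℝ n).eval (A + B + 1 + j) = P.eval (j:ℝ) := by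
    rw [hP]
    simp only [Polynomial.eval_comp, Polynomial.eval_add, Polynomial.eval_X, Polynomial.eval_C]
    congr 1; ring
  rw [show A + B + 1 + n + (j:ℝ) = A + B + 1 + j + n by ring, Gamma_add_nat_eq n e2,
    show A + 1 + (j:ℝ) = A + j + 1 by ring, Gamma_add_one e1.ne', hx, hdiv (j:ℝ)]
  field_simp

/-- coefficients of the normalized Jacobi polynomial in the variable `t = (1 - x) / 2` -/
def jb (A B : ℝ) (n j : ℕ) : ℝ :=
  (-1 : ℝ) ^ j * (n.choose j : ℝ) * ((Gamma (A + 1) / Gamma (A + B + 1 + n)) *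
    (Gamma (A + B + 1 + n + j) / Gamma (A + 1 + j)))

/-- the normalized Jacobi polynomial in the variable `t = (1 - x) / 2` -/
def jY (A B : ℝ) (n : ℕ) : Polynomial ℝ :=
  ∑ j ∈ Finset.range (n + 1), Polynomial.C (jb A B n j) * Polynomial.X ^ j

lemma jY_coeff (A B : ℝ) (n j : ℕ) : (jY A B n).coeff j = jb A B n j := by
  rw [jY, Polynomial.finsetSum_coeff]
  simp only [Polynomial.coeff_C_mul_X_pow]
  rw [Finset.sum_ite_eq]
  split_ifs with h
  · rfl
  · have : n.choose j = 0 := Nat.choose_eq_zero_of_lt (by simpa using h)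
    simp [jb, this]

lemma jY_eval (A B : ℝ) (n : ℕ) (t : ℝ) :
    (jY A B n).eval t = ∑ j ∈ Finset.range (n + 1), jb A B n j * t ^ j := by
  simp [jY, Polynomial.eval_finsetSum]

lemma jb_zero {A B : ℝ} (hA : 0 < A) (hB : 0 < B) (n : ℕ) : jb A B n 0 = 1 := by
  have h1 := (Gamma_pos_of_pos (by linarith : 0 < A + 1)).ne'
  have h2 := (Gamma_pos_of_pos (by positivity : 0 < A + B + 1 + n)).ne'
  simp [jb]
  field_simp

lemma jb_succ {A B : ℝ} (hA : 0 < A) (hB : 0 < B) (n j : ℕ) :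
    ((j : ℝ) + 1) * (A + 1 + j) * jb A B n (j + 1) =
      -(((n : ℝ) - j) * (A + B + 1 + n + j)) * jb A B n j := by
  have e1 : 0 < A + 1 + j := by positivity
  have e2 : 0 < A + B + 1 + n + j := by positivity
  have g1 := (Gamma_pos_of_pos e1).ne'
  have g2 := (Gamma_pos_of_pos e2).ne'
  have g3 := (Gamma_pos_of_pos (by positivity : 0 < A + B + 1 + n)).ne'
  have hch : (n.choose (j + 1) : ℝ) * (j + 1) = n.choose j * (n - j) := by
    rcases le_or_gt j n with h | h
    · have := Nat.choose_succ_right_eq n j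
      rw [← Nat.cast_sub h]
      exact_mod_cast this
    · rw [Nat.choose_eq_zero_of_lt h, Nat.choose_eq_zero_of_lt (by omega : n < j + 1)]
      simp
  simp only [jb]
  push_cast
  rw [show A + B + 1 + (n:ℝ) + (j + 1) = A + B + 1 + n + j + 1 by ring, Gamma_add_one e2.ne',
    show A + 1 + ((j:ℝ) + 1) = A + 1 + j + 1 by ring, Gamma_add_one e1.ne', pow_succ]
  field_simp
  first | linear_combination hch | linear_combination -hch

lemma jY_ode_poly {A B : ℝ} (hA : 0 < A) (hB : 0 < B) (n : ℕ) :
    (Polynomial.X - Polynomial.X ^ 2) * (jY A B n).derivative.derivative +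
      (Polynomial.C (A + 1) - Polynomial.C (A + B + 2) * Polynomial.X) * (jY A B n).derivative +
      Polynomial.C ((n:ℝ) * (n + A + B + 1)) * jY A B n = 0 := by
  ext j
  have key := jb_succ hA hB n j
  generalize ha : A + 1 = a
  generalize hd : A + B + 2 = d
  generalize hl : (n:ℝ) * (n + A + B + 1) = l
  rcases j with _ | _ | j
  · simp [sub_mul, mul_assoc, Polynomial.coeff_derivative, jY_coeff] at key ⊢
    subst ha hd hl
    linear_combination key
  · simp [sub_mul, mul_assoc, Polynomial.coeff_derivative, jY_coeff, Polynomial.coeff_X_mul, pow_two] at key ⊢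
    subst ha hd hl
    linear_combination key
  · simp [sub_mul, mul_assoc, Polynomial.coeff_derivative, jY_coeff, Polynomial.coeff_X_mul, pow_two] at key ⊢
    subst ha hd hl
    linear_combination key

lemma jY_ode {A B : ℝ} (hA : 0 < A) (hB : 0 < B) (n : ℕ) (t : ℝ) :
    t * (1 - t) * (jY A B n).derivative.derivative.eval t +
      (A + 1 - (A + B + 2) * t) * (jY A B n).derivative.eval t +
      ((n:ℝ) * (n + A + B + 1)) * (jY A B n).eval t = 0 := by
  have := congrArg (Polynomial.eval t) (jY_ode_poly hA hB n)
  simp only [Polynomial.eval_add, Polynomial.eval_mul, Polynomial.eval_sub, Polynomial.eval_X,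
    Polynomial.eval_C, Polynomial.eval_pow, Polynomial.eval_zero] at this
  linear_combination this

/-- weighted square integrals -/
def jN (A B : ℝ) (n : ℕ) (v : ℝ) : ℝ :=
  ∫ t in (0:ℝ)..1, ((jY A B n).eval t) ^ 2 * (t ^ (A - 1 - v) * (1 - t) ^ B)

lemma jw_cont {a b : ℝ} (ha : 0 ≤ a) (hb : 0 ≤ b) :
    Continuous fun t : ℝ => t ^ a * (1 - t) ^ b :=
  (continuous_id.rpow_const fun _ => Or.inr ha).mul
    ((continuous_const.sub continuous_id).rpow_const fun _ => Or.inr hb)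

lemma jF_eq {A B : ℝ} (hA : 1 ≤ A) (hB : 0 < B) (n k : ℕ) :
    ∫ t in (0:ℝ)..1, (jY A B n).eval t * (t ^ k * (t ^ (A - 1) * (1 - t) ^ B)) =
      Gamma (A + 1) / Gamma (A + B + 1 + n) * Gamma (B + 1) *
      ∑ j ∈ Finset.range (n + 1), (-1 : ℝ) ^ j * (n.choose j : ℝ) *
      (Gamma (A + B + 1 + n + j) / Gamma (A + 1 + j) *
        (Gamma (A + k + j) / Gamma (A + B + 1 + k + j))) := by
  have hc := jw_cont (by linarith : 0 ≤ A - 1) hB.le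
  simp only [jY_eval, Finset.sum_mul]
  rw [intervalIntegral.integral_finsetSum, Finset.mul_sum]
  · refine Finset.sum_congr rfl fun j _ => ?_
    have h1 : (∫ t in (0:ℝ)..1, jb A B n j * t ^ j * (t ^ k * (t ^ (A - 1) * (1 - t) ^ B))) =
        jb A B n j * ∫ t in (0:ℝ)..1, t ^ ((A + k + j) - 1) * (1 - t) ^ ((B + 1) - 1) := by
      rw [← intervalIntegral.integral_const_mul]
      refine intervalIntegral.integral_congr_Ioo_of_le zero_le_one fun t ht => ?_
      rw [add_sub_cancel_right, show A + k + j - 1 = (A - 1) + ((k + j : ℕ) : ℝ) by push_cast; ring,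
        rpow_add ht.1, rpow_natCast, pow_add]
      ring
    rw [h1, beta_real (by positivity) (by linarith), jb,
      show A + k + j + (B + 1) = A + B + 1 + k + j by ring]
    ring
  · intro j _
    apply Continuous.intervalIntegrable
    fun_prop

lemma jN_zero {A B : ℝ} (hA : 1 ≤ A) (hB : 0 < B) {n : ℕ} (hn : 1 ≤ n) :
    jN A B n 0 = Gamma A * Gamma (A + 1) * (n.factorial / Gamma (A + n + 1)) *
      (Gamma (B + 1 + n) / Gamma (A + B + 1 + n)) := by
  have hc := jw_cont (by linarith : 0 ≤ A - 1) hB.le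
  have h1 : jN A B n 0 = ∑ k ∈ Finset.range (n + 1), jb A B n k *
      ∫ t in (0:ℝ)..1, (jY A B n).eval t * (t ^ k * (t ^ (A - 1) * (1 - t) ^ B)) := by
    rw [jN]
    simp only [← intervalIntegral.integral_const_mul]
    rw [← intervalIntegral.integral_finsetSum]
    · refine intervalIntegral.integral_congr fun t _ => ?_
      simp only [sub_zero]
      rw [pow_two]
      conv_lhs => enter [1, 1]; rw [jY_eval]
      rw [Finset.sum_mul, Finset.sum_mul]
      refine Finset.sum_congr rfl fun j _ => ?_
      ring
    · intro j _
      apply Continuous.intervalIntegrable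
      fun_prop
  rw [h1, Finset.sum_eq_single_of_mem 0 (by simp)]
  · rw [jb_zero (by linarith) hB, jF_eq hA hB]
    have := altsum_zero hn (by linarith : 0 < A) hB
    simp only [Nat.cast_zero, add_zero]
    rw [this]
    have h1 := (Gamma_pos_of_pos (by linarith : 0 < B + 1)).ne'
    field_simp
  · intro k hk hk0
    rw [jF_eq hA hB, altsum_kill (by omega) (by simpa [Nat.lt_succ_iff] using hk) (by linarith) (by linarith)]
    simp


lemma jN_integrand_cont (A B : ℝ) (n : ℕ) {v : ℝ} (hB : 0 ≤ B) (hv : 0 ≤ A - 1 - v) :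
    Continuous fun t : ℝ => ((jY A B n).eval t) ^ 2 * (t ^ (A - 1 - v) * (1 - t) ^ B) := by
  have hc := jw_cont hv hB
  fun_prop

lemma jN_rec {A B : ℝ} (hA : 0 < A) (hB : 0 < B) (n : ℕ) {u : ℝ} (hu0 : 0 ≤ u)
    (hu : 2 ≤ A - u) :
    (u + 1) * ((A + 1 + u) / 2) * (A - u - 1) * jN A B n (u + 1) ≤
      ((n:ℝ) * (n + A + B + 1) * (1 + 2 * u) + (u + 1) * ((A + 1 + u) / 2) * (A - u + B) +
        u * ((A + 1 + u) / 2 + B / 2) * (A - u)) * jN A B n u := by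
  obtain ⟨lam, hlam⟩ : ∃ l, (n:ℝ) * (n + A + B + 1) = l := ⟨_, rfl⟩
  obtain ⟨κ, hκ⟩ : ∃ l, (A + 1 + u) / 2 = l := ⟨_, rfl⟩
  obtain ⟨μ, hμ⟩ : ∃ l, B / 2 = l := ⟨_, rfl⟩
  have hlam0 : 0 ≤ lam := by rw [← hlam]; positivity
  have hκ0 : 0 ≤ κ := by rw [← hκ]; positivity
  have hμ0 : 0 ≤ μ := by rw [← hμ]; positivity
  have hode := jY_ode hA hB n
  rw [hlam] at hode ⊢
  rw [hκ, hμ]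
  have hd1 : ∀ t, HasDerivAt (fun t => (jY A B n).eval t) ((jY A B n).derivative.eval t) t :=
    fun t => Polynomial.hasDerivAt _ t
  have hd2 : ∀ t, HasDerivAt (fun t => (jY A B n).derivative.eval t)
    ((jY A B n).derivative.derivative.eval t) t := fun t => Polynomial.hasDerivAt _ t
  set Y : ℝ → ℝ := fun t => (jY A B n).eval t with hY
  set Y1 : ℝ → ℝ := fun t => (jY A B n).derivative.eval t with hY1
  set Y2 : ℝ → ℝ := fun t => (jY A B n).derivative.derivative.eval t with hY2
  have hYc : Continuous Y := Polynomial.continuous _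
  have hY1c : Continuous Y1 := Polynomial.continuous _
  let E : ℝ → ℝ := fun t => 1 / 2 * (t ^ 2 * (1 - t)) * (Y1 t) ^ 2 + 1 / 2 * lam * t * (Y t) ^ 2 +
    (t * (κ * (1 - t) - μ * t)) * (Y t * Y1 t) +
      1 / 2 * ((u + 1) * κ - u * (κ + μ) * t) * (Y t) ^ 2
  let W : ℝ → ℝ := fun t => t ^ (A - u - 1) * (1 - t) ^ (B + 1) * E t
  let R : ℝ → ℝ := fun t => (u + 1) * κ * (A - u - 1) * (1 - t) -
      (lam * (1 + 2 * u * (1 - t)) + (u + 1) * κ * (B + 1) + u * (κ + μ) * (A - u) * (1 - t)) * t +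
      u * (κ + μ) * (B + 1) * t ^ 2
  have hWc : Continuous W := by
    have := jw_cont (by linarith : 0 ≤ A - u - 1) (by linarith : 0 ≤ B + 1)
    simp only [W, E]
    fun_prop
  have hwc := jw_cont (by linarith : 0 ≤ A - 1 - (u + 1)) hB.le
  have hwc2 := jw_cont (by linarith : 0 ≤ A - 1 - u) hB.le
  have hder : ∀ t ∈ Ioo (0:ℝ) 1, HasDerivAt W
      (1 / 2 * ((Y t) ^ 2 * (t ^ (A - 1 - (u + 1)) * (1 - t) ^ B) * R t)) t := by
    intro t ht
    have ht1 : 0 < 1 - t := by linarith [ht.2]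
    have a1 : HasDerivAt (fun t : ℝ => t ^ (A - u - 1)) ((A - u - 1) * t ^ (A - u - 1 - 1)) t :=
      Real.hasDerivAt_rpow_const (Or.inl ht.1.ne')
    have a2 : HasDerivAt (fun t : ℝ => (1 - t) ^ (B + 1)) (-1 * (B + 1) * (1 - t) ^ (B + 1 - 1)) t :=
      ((hasDerivAt_id t).const_sub 1).rpow_const (Or.inl ht1.ne')
    have i0 : HasDerivAt (fun t : ℝ => t) 1 t := hasDerivAt_id t
    have i1 : HasDerivAt (fun t : ℝ => 1 - t) (-1) t := (hasDerivAt_id t).const_sub 1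
    have i2 := i0.pow 2
    have y0 := hd1 t
    have y1 := hd2 t
    have e1 := ((i2.mul i1).const_mul (1 / 2)).mul (y1.pow 2)
    have e2 := (i0.const_mul (1 / 2 * lam)).mul (y0.pow 2)
    have e3 := (i0.mul ((i1.const_mul κ).sub (i0.const_mul μ))).mul (y0.mul y1)
    have e4 := (((i0.const_mul (u * (κ + μ))).const_sub ((u + 1) * κ)).const_mul (1 / 2)).mul (y0.pow 2)
    have key := (a1.mul a2).mul (((e1.add e2).add e3).add e4)
    refine key.congr_deriv ?_
    have o := hode t
    have r1 : t ^ (A - u - 1) = t ^ (A - 1 - (u + 1)) * t := by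
      rw [← rpow_add_one ht.1.ne']; congr 1; ring
    have r2 : (1 - t) ^ (B + 1) = (1 - t) ^ B * (1 - t) := rpow_add_one ht1.ne' B
    have r3 : t ^ (A - u - 1 - 1) = t ^ (A - 1 - (u + 1)) := by congr 1; ring
    have r4 : (1 - t) ^ (B + 1 - 1) = (1 - t) ^ B := by congr 1; ring
    simp only [Pi.add_apply, Pi.mul_apply, Pi.sub_apply, Pi.pow_apply, r1, r2, r3, r4, R, hY, hY1]
    generalize t ^ (A - 1 - (u + 1)) = S1
    generalize (1 - t) ^ B = S2
    generalize Polynomial.eval t (jY A B n) = z0 at *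
    generalize Polynomial.eval t (jY A B n).derivative = z1 at *
    generalize Polynomial.eval t (jY A B n).derivative.derivative = z2 at *
    subst hκ hμ
    push_cast
    linear_combination (S1 * S2 * (t ^ 2 * (1 - t) * z1 + t * ((A + 1 + u) / 2 * (1 - t) - B / 2 * t) * z0)) * o
  have hRc : Continuous R := by simp only [R]; fun_prop
  have hcontI : Continuous fun t => (1 / 2 * ((Y t) ^ 2 * (t ^ (A - 1 - (u + 1)) * (1 - t) ^ B) * R t)) := by
    fun_prop
  have hFTC := intervalIntegral.integral_eq_sub_of_hasDerivAt_of_le zero_le_one hWc.continuousOn hder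
    (hcontI.intervalIntegrable _ _)
  have hW0 : W 0 = 0 := by simp [W, zero_rpow (by linarith : A - u - 1 ≠ 0)]
  have hW1 : W 1 = 0 := by simp [W, zero_rpow (by linarith : B + 1 ≠ 0)]
  rw [hW0, hW1, sub_zero] at hFTC
  rw [intervalIntegral.integral_const_mul] at hFTC
  have hI : ∫ t in (0:ℝ)..1, (Y t) ^ 2 * (t ^ (A - 1 - (u + 1)) * (1 - t) ^ B) * R t = 0 := by linarith
  rw [← sub_nonpos, jN, jN, ← intervalIntegral.integral_const_mul, ← intervalIntegral.integral_const_mul,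
    ← intervalIntegral.integral_sub]
  · refine le_trans ?_ hI.le
    apply intervalIntegral.integral_mono_on_of_le_Ioo zero_le_one
    · apply Continuous.intervalIntegrable
      fun_prop
    · apply Continuous.intervalIntegrable
      fun_prop
    · intro t ht
      have ht1 : 0 < 1 - t := by linarith [ht.2]
      have r1 : t ^ (A - 1 - u) = t ^ (A - 1 - (u + 1)) * t := by
        rw [← rpow_add_one ht.1.ne']; congr 1; ring
      rw [r1]
      have hS1 : 0 ≤ t ^ (A - 1 - (u + 1)) := rpow_nonneg ht.1.le _
      have hS2 : 0 ≤ (1 - t) ^ B := rpow_nonneg ht1.le _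
      have hau : 0 ≤ A - u := by linarith
      have hX : 0 ≤ (Y t) ^ 2 * (t ^ (A - 1 - (u + 1)) * (1 - t) ^ B) *
        ((2 * u * lam + u * (κ + μ) * (A - u) + u * (κ + μ) * (B + 1)) * t ^ 2) := by positivity
      simp only [R, hY] at hX ⊢
      linarith
  · apply Continuous.intervalIntegrable
    fun_prop
  · apply Continuous.intervalIntegrable
    fun_prop


lemma jN_nonneg (A B : ℝ) (n : ℕ) (v : ℝ) : 0 ≤ jN A B n v := by
  apply intervalIntegral.integral_nonneg zero_le_one
  intro t ht
  have h1 : 0 ≤ t ^ (A - 1 - v) := rpow_nonneg ht.1 _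
  have h2 : 0 ≤ (1 - t) ^ B := rpow_nonneg (by linarith [ht.2]) _
  positivity

lemma jN_step {A B D : ℝ} (hA : 0 < A) (hB : 0 < B) (n : ℕ) (hD : 1 ≤ D) (hAD : A + B + 1 ≤ D)
    (hn : D ^ 2 ≤ n) {u : ℝ} (hu0 : 0 ≤ u) (hu : 2 ≤ A - u) :
    (A + 1 + u) * (A - 1 - u) * jN A B n (u + 1) ≤ 4 * ((n:ℝ) ^ 2 * (1 + 2 / D)) * jN A B n u := by
  have hrec := jN_rec hA hB n hu0 hu
  have hN := jN_nonneg A B n u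
  have hn0 : (0:ℝ) ≤ n := Nat.cast_nonneg n
  have hDn : D * n ≤ (n:ℝ) ^ 2 / D := by
    rw [le_div_iff₀ (by linarith)]
    nlinarith
  have hDn2 : D ^ 2 ≤ D * n := by nlinarith
  have hb1 : (A + 1 + u) / 2 * (A - u + B) ≤ D * D :=
    mul_le_mul (by linarith) (by linarith) (by linarith) (by linarith)
  have hb2 : ((A + 1 + u) / 2 + B / 2) * (A - u) ≤ D * D :=
    mul_le_mul (by linarith) (by linarith) (by linarith) (by linarith)
  have hb20 : 0 ≤ ((A + 1 + u) / 2 + B / 2) * (A - u) :=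
    mul_nonneg (by linarith) (by linarith)
  have hlam : (n:ℝ) * (n + A + B + 1) ≤ n ^ 2 + D * n := by nlinarith
  have hlam0 : 0 ≤ (n:ℝ) * (n + A + B + 1) := by positivity
  have hth : (n:ℝ) ^ 2 * (1 + 2 / D) = n ^ 2 + 2 * ((n:ℝ) ^ 2 / D) := by ring
  have hnum : ((n:ℝ) * (n + A + B + 1) * (1 + 2 * u) + (u + 1) * ((A + 1 + u) / 2) * (A - u + B) +
        u * ((A + 1 + u) / 2 + B / 2) * (A - u)) ≤ (u + 1) * (2 * ((n:ℝ) ^ 2 * (1 + 2 / D))) := by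
    have h1 : (n:ℝ) * (n + A + B + 1) * (1 + 2 * u) ≤ (n ^ 2 + D * n) * (2 * (u + 1)) :=
      mul_le_mul hlam (by linarith) (by linarith) (by positivity)
    have h2 : (u + 1) * ((A + 1 + u) / 2) * (A - u + B) ≤ (u + 1) * (D * D) := by
      rw [mul_assoc]; exact mul_le_mul_of_nonneg_left hb1 (by linarith)
    have h3 : u * ((A + 1 + u) / 2 + B / 2) * (A - u) ≤ (u + 1) * (D * D) := by
      rw [mul_assoc]; exact mul_le_mul (by linarith) hb2 hb20 (by linarith)
    have h4 : (u + 1) * (2 * (n ^ 2 + D * n) + 2 * (D * D)) ≤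
        (u + 1) * (2 * ((n:ℝ) ^ 2 * (1 + 2 / D))) := by
      apply mul_le_mul_of_nonneg_left _ (by linarith)
      rw [hth]
      linarith
    linarith
  have h5 := hrec.trans (mul_le_mul_of_nonneg_right hnum hN)
  have h6 : (u + 1) * ((A + 1 + u) * (A - 1 - u) * jN A B n (u + 1)) ≤
      (u + 1) * (4 * ((n:ℝ) ^ 2 * (1 + 2 / D)) * jN A B n u) := by linarith
  exact le_of_mul_le_mul_left h6 (by linarith)

lemma rpow_le_one_add {x u : ℝ} (hx : 0 ≤ x) (hu0 : 0 ≤ u) (hu1 : u ≤ 1) : x ^ u ≤ 1 + x := by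
  rcases le_total x 1 with h | h
  · have := rpow_le_one hx h hu0
    linarith
  · have := rpow_le_rpow_of_exponent_le h hu1
    rw [rpow_one] at this
    linarith

lemma jN_frac {A B D : ℝ} (hA : 2 ≤ A) (hB : 0 < B) (n : ℕ) (hD : 1 ≤ D) (hAD : A + B + 1 ≤ D)
    (hn : D ^ 2 ≤ n) {u : ℝ} (hu0 : 0 ≤ u) (hu1 : u ≤ 1) :
    jN A B n u ≤ 13 * ((n:ℝ) ^ 2 * (1 + 2 / D) / (A + 1) ^ 2) ^ u * jN A B n 0 := by
  have hn1 : (1:ℝ) ≤ n := by nlinarith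
  set X := (n:ℝ) ^ 2 * (1 + 2 / D) / (A + 1) ^ 2 with hX
  have hX0 : 0 < X := by positivity
  have hst := jN_step (by linarith) hB n hD hAD hn le_rfl (by linarith : 2 ≤ A - 0)
  have hN0 := jN_nonneg A B n 0
  have hN1 := jN_nonneg A B n 1
  have h1 : jN A B n 1 ≤ 12 * X * jN A B n 0 := by
    have e : (n:ℝ) ^ 2 * (1 + 2 / D) = X * (A + 1) ^ 2 := by rw [hX]; field_simp
    rw [e] at hst
    simp only [zero_add, add_zero, sub_zero] at hst
    have h2 : (A + 1) * ((A - 1) * jN A B n 1) ≤ (A + 1) * (4 * X * (A + 1) * jN A B n 0) := by linarith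
    have h3 := le_of_mul_le_mul_left h2 (by linarith)
    have h4 : (A + 1) * jN A B n 1 ≤ (A + 1) * (12 * X * jN A B n 0) := by nlinarith
    exact le_of_mul_le_mul_left h4 (by linarith)
  have hc0 := jN_integrand_cont A B n (v := 0) hB.le (by linarith)
  have hc1 := jN_integrand_cont A B n (v := 1) hB.le (by linarith)
  have hcu := jN_integrand_cont A B n (v := u) hB.le (by linarith)
  have h5 : jN A B n u ≤ X ^ u * jN A B n 0 + X ^ u / X * jN A B n 1 := by
    rw [jN, jN, jN, ← intervalIntegral.integral_const_mul, ← intervalIntegral.integral_const_mul,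
      ← intervalIntegral.integral_add]
    · apply intervalIntegral.integral_mono_on_of_le_Ioo zero_le_one (hcu.intervalIntegrable _ _)
      · exact ((hc0.const_mul _).add (hc1.const_mul _)).intervalIntegrable _ _
      · intro t ht
        have ht1 : 0 < 1 - t := by linarith [ht.2]
        have r1 : t ^ (A - 1 - u) = t ^ (A - 1 - 0) * (X ^ u * (1 / (X * t)) ^ u) := by
          have h6 : X ^ u * (1 / (X * t)) ^ u = t ^ (-u) := by
            rw [← mul_rpow hX0.le (by have := ht.1; positivity), rpow_neg ht.1.le, ← inv_rpow ht.1.le]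
            congr 1
            have := ht.1
            field_simp
          rw [h6, ← rpow_add ht.1]
          congr 1; ring
        have r2 : t ^ (A - 1 - 1) = t ^ (A - 1 - 0) * (1 / t) := by
          rw [sub_zero, rpow_sub_one ht.1.ne' (A - 1), mul_one_div]
        have h7 : (1 / (X * t)) ^ u ≤ 1 + 1 / (X * t) :=
          rpow_le_one_add (by have := ht.1; positivity) hu0 hu1
        have hS1 : 0 ≤ t ^ (A - 1 - 0) := rpow_nonneg ht.1.le _
        have hS2 : 0 ≤ (1 - t) ^ B := rpow_nonneg ht1.le _
        have hS3 : 0 ≤ X ^ u := rpow_nonneg hX0.le _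
        rw [r1, r2]
        have h8 := mul_le_mul_of_nonneg_left h7 (by positivity :
          0 ≤ (Polynomial.eval t (jY A B n)) ^ 2 * (t ^ (A - 1 - 0) * (1 - t) ^ B) * X ^ u)
        have ht0 := ht.1
        calc _ = _ := by ring
          _ ≤ _ := h8
          _ = _ := by field_simp
    · exact (hc0.const_mul _).intervalIntegrable _ _
    · exact (hc1.const_mul _).intervalIntegrable _ _
  have hS3 : 0 ≤ X ^ u := rpow_nonneg hX0.le _
  have h9 : X ^ u / X * jN A B n 1 ≤ X ^ u / X * (12 * X * jN A B n 0) :=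
    mul_le_mul_of_nonneg_left h1 (by positivity)
  have h10 : X ^ u / X * (12 * X * jN A B n 0) = 12 * X ^ u * jN A B n 0 := by field_simp
  linarith

lemma prod_min {g : ℕ → ℝ} (hg : Antitone g) {k K : ℕ} (hkK : k ≤ K) (hpos : ∀ i < K, 0 < g i) :
    min 1 (∏ i ∈ Finset.range K, g i) ≤ ∏ i ∈ Finset.range k, g i := by
  rcases le_or_gt 1 (g k) with h | h
  · refine (min_le_left _ _).trans ?_
    calc (1:ℝ) = ∏ i ∈ Finset.range k, 1 := by simp
      _ ≤ _ := Finset.prod_le_prod (fun _ _ => zero_le_one) fun i hi =>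
        h.trans (hg (Finset.mem_range.mp hi).le)
  · refine (min_le_right _ _).trans ?_
    rw [← Finset.prod_range_mul_prod_Ico g hkK]
    have h1 : ∏ i ∈ Finset.Ico k K, g i ≤ 1 := by
      refine Finset.prod_le_one (fun i hi => (hpos i (Finset.mem_Ico.mp hi).2).le) fun i hi => ?_
      exact (hg (Finset.mem_Ico.mp hi).1).trans h.le
    have h2 : 0 ≤ ∏ i ∈ Finset.range k, g i :=
      Finset.prod_nonneg fun i hi => (hpos i (by have := Finset.mem_range.mp hi; omega)).le
    nlinarith

lemma prod_fact (K : ℕ) : ∏ i ∈ Finset.range K, (((K:ℝ) + 1 + i) * ((K:ℝ) - i)) = (2 * K).factorial := by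
  rw [Finset.prod_mul_distrib]
  have h1 : ∏ i ∈ Finset.range K, ((K:ℝ) - i) = ∏ i ∈ Finset.range K, ((i:ℝ) + 1) := by
    rw [← Finset.prod_range_reflect (fun i => ((i:ℝ) + 1)) K]
    refine Finset.prod_congr rfl fun i hi => ?_
    have : i < K := Finset.mem_range.mp hi
    have h : ((K - 1 - i : ℕ) : ℝ) = (K:ℝ) - 1 - i := by
      rw [Nat.sub_sub, Nat.cast_sub (by omega)]; push_cast; ring
    rw [h]; ring
  rw [h1, ← Finset.prod_range_add_one_eq_factorial, two_mul, Finset.prod_range_add]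
  push_cast
  rw [mul_comm]
  congr 1
  refine Finset.prod_congr rfl fun i hi => ?_
  ring

/-- the step factors -/
def gfac (A u0 : ℝ) (i : ℕ) : ℝ :=
  exp 2 / 4 * ((A + 1 + u0 + i) * (A - 1 - u0 - i)) / (A + 1) ^ 2

lemma gfac_prod {A u0 : ℝ} (hA : 2 ≤ A) (h0 : 0 ≤ u0) (h1 : u0 ≤ 1) {k : ℕ} (hk : 1 ≤ A - u0 - k) :
    exp (-8) ≤ ∏ i ∈ Finset.range k, gfac A u0 i := by
  have hanti : Antitone (gfac A u0) := by
    intro i j hij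
    have hij' : (i:ℝ) ≤ j := by exact_mod_cast hij
    have hi0 : (0:ℝ) ≤ i := Nat.cast_nonneg i
    unfold gfac
    have : (A + 1 + u0 + j) * (A - 1 - u0 - j) ≤ (A + 1 + u0 + i) * (A - 1 - u0 - i) := by nlinarith
    gcongr
  set K := ⌊A - u0 - 1⌋₊ with hK
  have hK1 : (K:ℝ) ≤ A - u0 - 1 := Nat.floor_le (by linarith)
  have hK2 : A - u0 - 1 < K + 1 := Nat.lt_floor_add_one _
  have hkK : k ≤ K := Nat.le_floor (by linarith)
  have hpos : ∀ i < K, 0 < gfac A u0 i := by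
    intro i hi
    have : (i:ℝ) + 1 ≤ K := by exact_mod_cast hi
    unfold gfac
    have h2 : 0 < A - 1 - u0 - i := by linarith
    positivity
  refine le_trans (le_min ?_ ?_) (prod_min hanti hkK hpos)
  · rw [exp_le_one_iff]; norm_num
  · have hfac : ((2 * K).factorial : ℝ) ≤ ∏ i ∈ Finset.range K, ((A + 1 + u0 + i) * (A - 1 - u0 - i)) := by
      rw [← prod_fact]
      refine Finset.prod_le_prod (fun i hi => ?_) fun i hi => ?_
      · have : (i:ℝ) + 1 ≤ K := by exact_mod_cast Finset.mem_range.mp hi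
        exact mul_nonneg (by positivity) (by linarith)
      · have : (i:ℝ) + 1 ≤ K := by exact_mod_cast Finset.mem_range.mp hi
        exact mul_le_mul (by linarith) (by linarith) (by linarith) (by positivity)
    have hprod : ∏ i ∈ Finset.range K, gfac A u0 i =
        (exp 2 / 4 / (A + 1) ^ 2) ^ K * ∏ i ∈ Finset.range K, ((A + 1 + u0 + i) * (A - 1 - u0 - i)) := by
      rw [← Finset.card_range K, ← Finset.prod_const, Finset.card_range, ← Finset.prod_mul_distrib]
      refine Finset.prod_congr rfl fun i _ => ?_
      unfold gfac; ring
    rw [hprod]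
    refine le_trans ?_ (mul_le_mul_of_nonneg_left hfac (by positivity))
    rcases Nat.eq_zero_or_pos K with hz | hp
    · rw [hz]; simp
    have hKr : (1:ℝ) ≤ K := by exact_mod_cast hp
    have hst : ((2 * K : ℕ) : ℝ) ^ (2 * K) / (2 * K).factorial ≤ exp ((2 * K : ℕ) : ℝ) :=
      pow_div_factorial_le_exp _ (by positivity) _
    rw [div_le_iff₀ (by positivity)] at hst
    have h3 : (A + 1) ≤ K * exp (4 / K) := by
      have : 4 / (K:ℝ) + 1 ≤ exp (4 / K) := add_one_le_exp _
      have h4 : (K:ℝ) * (4 / K + 1) ≤ K * exp (4 / K) := mul_le_mul_of_nonneg_left this (by linarith)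
      have h5 : (K:ℝ) * (4 / K + 1) = 4 + K := by field_simp
      linarith
    have h6 : (A + 1) ^ (2 * K) ≤ (K:ℝ) ^ (2 * K) * exp 8 := by
      refine (pow_le_pow_left₀ (by linarith) h3 _).trans (le_of_eq ?_)
      rw [mul_pow, ← exp_nat_mul]
      congr 2
      push_cast
      field_simp
      norm_num
    have h7 : (exp 2 / 4 / (A + 1) ^ 2) ^ K = exp ((2 * K : ℕ):ℝ) / (4 ^ K * (A + 1) ^ (2 * K)) := by
      rw [div_pow, div_pow, ← exp_nat_mul, ← pow_mul, div_div]
      congr 2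
      push_cast; ring
    rw [h7, exp_neg, div_mul_eq_mul_div, le_div_iff₀ (by positivity)]
    refine le_trans ?_ hst
    have h8 : ((2 * K : ℕ) : ℝ) ^ (2 * K) = 4 ^ K * (K:ℝ) ^ (2 * K) := by
      push_cast
      rw [mul_pow, pow_mul 2 2 K]
      norm_num
    rw [h8]
    have he := exp_pos 8
    calc (exp 8)⁻¹ * (4 ^ K * (A + 1) ^ (2 * K)) ≤ (exp 8)⁻¹ * (4 ^ K * ((K:ℝ) ^ (2 * K) * exp 8)) := by gcongr
      _ = _ := by field_simp

lemma jN_iter {A B D : ℝ} (hA : 2 ≤ A) (hB : 0 < B) (n : ℕ) (hD : 1 ≤ D) (hAD : A + B + 1 ≤ D)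
    (hn : D ^ 2 ≤ n) {u0 : ℝ} (h0 : 0 ≤ u0) (k : ℕ) (hk : 1 ≤ A - u0 - k) :
    jN A B n (u0 + k) * ∏ i ∈ Finset.range k, gfac A u0 i ≤
      jN A B n u0 * (exp 2 * ((n:ℝ) ^ 2 * (1 + 2 / D) / (A + 1) ^ 2)) ^ k := by
  induction k with
  | zero => simp
  | succ k ih =>
    push_cast at hk ⊢
    have ih' := ih (by linarith)
    have hst := jN_step (by linarith) hB n hD hAD hn (by positivity : 0 ≤ u0 + k)
      (by linarith : 2 ≤ A - (u0 + k))
    rw [Finset.prod_range_succ, pow_succ]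
    have hP : 0 ≤ ∏ i ∈ Finset.range k, gfac A u0 i := by
      refine Finset.prod_nonneg fun i hi => ?_
      have : (i:ℝ) + 1 ≤ k := by exact_mod_cast Finset.mem_range.mp hi
      unfold gfac
      have h2 : 0 < A - 1 - u0 - i := by linarith
      positivity
    rw [← add_assoc]
    have hst2 : jN A B n (u0 + k + 1) * gfac A u0 k ≤
        (exp 2 * ((n:ℝ) ^ 2 * (1 + 2 / D) / (A + 1) ^ 2)) * jN A B n (u0 + k) := by
      have := mul_le_mul_of_nonneg_left hst (by positivity : 0 ≤ exp 2 / 4 / (A + 1) ^ 2)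
      unfold gfac
      refine le_trans (le_of_eq ?_) (this.trans (le_of_eq ?_)) <;> ring
    have hX : 0 ≤ exp 2 * ((n:ℝ) ^ 2 * (1 + 2 / D) / (A + 1) ^ 2) := by positivity
    calc jN A B n (u0 + k + 1) * ((∏ i ∈ Finset.range k, gfac A u0 i) * gfac A u0 k)
        = (∏ i ∈ Finset.range k, gfac A u0 i) * (jN A B n (u0 + k + 1) * gfac A u0 k) := by ring
      _ ≤ (∏ i ∈ Finset.range k, gfac A u0 i) *
          ((exp 2 * ((n:ℝ) ^ 2 * (1 + 2 / D) / (A + 1) ^ 2)) * jN A B n (u0 + k)) :=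
        mul_le_mul_of_nonneg_left hst2 hP
      _ = (jN A B n (u0 + k) * (∏ i ∈ Finset.range k, gfac A u0 i)) *
          (exp 2 * ((n:ℝ) ^ 2 * (1 + 2 / D) / (A + 1) ^ 2)) := by ring
      _ ≤ _ := by
        exact (mul_le_mul_of_nonneg_right ih' hX).trans (le_of_eq (by ring))

lemma jN_bound {A B D : ℝ} (hA : 2 ≤ A) (hB : 0 < B) (n : ℕ) (hD : 1 ≤ D) (hAD : A + B + 1 ≤ D)
    (hn : D ^ 2 ≤ n) {u : ℝ} (hu0 : 0 ≤ u) (hu : 1 ≤ A - u) :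
    jN A B n u ≤ 13 * exp 10 * exp (2 * u) * (n:ℝ) ^ (2 * u) * (A + 1) ^ (-(2 * u)) * jN A B n 0 := by
  have hn1 : (1:ℝ) ≤ n := by nlinarith
  obtain ⟨k, u0, h0, h1, rfl⟩ : ∃ (k : ℕ) (u0 : ℝ), 0 ≤ u0 ∧ u0 ≤ 1 ∧ u = u0 + k := by
    refine ⟨⌊u⌋₊, u - ⌊u⌋₊, ?_, ?_, by ring⟩
    · linarith [Nat.floor_le hu0]
    · linarith [Nat.lt_floor_add_one u]
  have hit := jN_iter hA hB n hD hAD hn h0 k (by linarith)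
  have hpr := gfac_prod hA h0 h1 (k := k) (by linarith)
  have hfr := jN_frac hA hB n hD hAD hn h0 h1
  have hNu := jN_nonneg A B n (u0 + k)
  have hN0 := jN_nonneg A B n 0
  set X := (n:ℝ) ^ 2 * (1 + 2 / D) / (A + 1) ^ 2 with hX
  have hX0 : 0 < X := by positivity
  have hk0 : (0:ℝ) ≤ k := Nat.cast_nonneg k
  have a1 : jN A B n (u0 + k) * exp (-8) ≤ 13 * X ^ u0 * jN A B n 0 * (exp 2 * X) ^ k :=
    (mul_le_mul_of_nonneg_left hpr hNu).trans (hit.trans (mul_le_mul_of_nonneg_right hfr (by positivity)))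
  have a2 : (exp 2 * X) ^ k * X ^ u0 ≤ exp (2 * (u0 + k)) * X ^ (u0 + k) := by
    rw [mul_pow, rpow_add hX0, rpow_natCast, ← exp_nat_mul]
    have : exp (k * 2) ≤ exp (2 * (u0 + k)) := exp_le_exp.mpr (by linarith)
    have h3 : 0 ≤ X ^ u0 := rpow_nonneg hX0.le _
    calc exp (k * 2) * X ^ k * X ^ u0 = exp (k * 2) * (X ^ u0 * X ^ k) := by ring
      _ ≤ _ := mul_le_mul_of_nonneg_right this (by positivity)
  have a3 : X ^ (u0 + k) ≤ exp 2 * ((n:ℝ) ^ (2 * (u0 + k)) * (A + 1) ^ (-(2 * (u0 + k)))) := by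
    have hA1 : 0 < A + 1 := by linarith
    rw [hX, div_rpow (by positivity) (by positivity), mul_rpow (by positivity) (by positivity),
      rpow_neg hA1.le, rpow_mul (by positivity : (0:ℝ) ≤ n), rpow_mul hA1.le, rpow_two, rpow_two]
    have h4 : (1 + 2 / D) ^ (u0 + k) ≤ exp 2 := by
      have h5 : 1 + 2 / D ≤ exp (2 / D) := by linarith [add_one_le_exp (2 / D)]
      refine (rpow_le_rpow (by positivity) h5 hu0).trans ?_
      rw [← exp_mul, exp_le_exp, div_mul_eq_mul_div, div_le_iff₀ (by linarith)]
      linarith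
    rw [div_eq_mul_inv]
    have h6 : 0 ≤ (((A + 1) ^ 2) ^ (u0 + k))⁻¹ := by positivity
    have h7 : 0 ≤ ((n:ℝ) ^ 2) ^ (u0 + k) := by positivity
    calc ((n:ℝ) ^ 2) ^ (u0 + k) * (1 + 2 / D) ^ (u0 + k) * (((A + 1) ^ 2) ^ (u0 + k))⁻¹
        ≤ ((n:ℝ) ^ 2) ^ (u0 + k) * exp 2 * (((A + 1) ^ 2) ^ (u0 + k))⁻¹ := by gcongr
      _ = _ := by ring
  have e8 : exp (-8) * exp 8 = 1 := by rw [← exp_add]; simp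
  have e10 : exp 10 = exp 8 * exp 2 := by rw [← exp_add]; norm_num
  calc jN A B n (u0 + k) = jN A B n (u0 + k) * exp (-8) * exp 8 := by rw [mul_assoc, e8, mul_one]
    _ ≤ 13 * X ^ u0 * jN A B n 0 * (exp 2 * X) ^ k * exp 8 := mul_le_mul_of_nonneg_right a1 (exp_pos _).le
    _ = 13 * jN A B n 0 * exp 8 * ((exp 2 * X) ^ k * X ^ u0) := by ring
    _ ≤ 13 * jN A B n 0 * exp 8 * (exp (2 * (u0 + k)) *
        (exp 2 * ((n:ℝ) ^ (2 * (u0 + k)) * (A + 1) ^ (-(2 * (u0 + k)))))) := by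
      apply mul_le_mul_of_nonneg_left _ (by positivity)
      exact a2.trans (mul_le_mul_of_nonneg_left a3 (exp_pos _).le)
    _ = _ := by rw [e10]; ring


lemma Gamma_ratio_upper {x a : ℝ} (hx : 0 < x) (ha : 0 < a) :
    Gamma (x + a) ≤ (x + a) ^ a * Gamma x := by
  have h := convexOn_log_Gamma.slope_mono_adjacent (mem_Ioi.mpr hx)
    (mem_Ioi.mpr (by linarith : 0 < x + a + 1)) (by linarith : x < x + a) (by linarith)
  have hxa : 0 < x + a := by linarith
  have g1 := Gamma_pos_of_pos hxa
  have g2 := Gamma_pos_of_pos hx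
  simp only [Function.comp] at h
  rw [Gamma_add_one hxa.ne', log_mul hxa.ne' g1.ne', div_le_iff₀ (by linarith)] at h
  rw [← log_le_log_iff g1 (by positivity), log_mul (by positivity) g2.ne', log_rpow hxa]
  have e : (log (x + a) + log (Gamma (x + a)) - log (Gamma (x + a))) / (x + a + 1 - (x + a)) * (x + a - x)
    = a * log (x + a) := by
    rw [show x + a + 1 - (x + a) = 1 by ring]; ring
  rw [e] at h
  linarith

lemma Gamma_ratio_lower {x a : ℝ} (hx : 0 < x) (ha : 1 < a) :
    x ^ a * Gamma x ≤ Gamma (x + a) := by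
  have h := convexOn_log_Gamma.slope_mono_adjacent (mem_Ioi.mpr hx)
    (mem_Ioi.mpr (by linarith : 0 < x + a)) (by linarith : x < x + 1) (by linarith)
  have hxa : 0 < x + a := by linarith
  have g1 := Gamma_pos_of_pos hxa
  have g2 := Gamma_pos_of_pos hx
  simp only [Function.comp] at h
  rw [Gamma_add_one hx.ne', log_mul hx.ne' g2.ne', le_div_iff₀ (by linarith)] at h
  rw [← log_le_log_iff (by positivity) g1, log_mul (by positivity) g2.ne', log_rpow hx]
  have e : (log x + log (Gamma x) - log (Gamma x)) / (x + 1 - x) * (x + a - (x + 1))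
    = (a - 1) * log x := by
    rw [show x + 1 - x = 1 by ring]; ring
  rw [e] at h
  linarith

lemma jN_zero_bound {A B : ℝ} (hA : 2 ≤ A) (hB : 0 < B) {n : ℕ} (hn : 1 ≤ n) :
    jN A B n 0 ≤ 2 * Gamma (A + 1) ^ 2 * (A + 1) ^ (-(2/3) : ℝ) * (n:ℝ) ^ (-(2 * A)) := by
  rw [jN_zero (by linarith) hB hn]
  have hn0 : (0:ℝ) < n := by exact_mod_cast hn
  have hA0 : 0 < A := by linarith
  have gA := Gamma_pos_of_pos hA0
  have h1 : (n.factorial : ℝ) / Gamma (A + n + 1) ≤ (n:ℝ) ^ (-A) := by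
    have := Gamma_ratio_lower (by positivity : (0:ℝ) < n + 1) (by linarith : 1 < A)
    rw [Gamma_nat_eq_factorial, show (n:ℝ) + 1 + A = A + n + 1 by ring] at this
    rw [div_le_iff₀ (Gamma_pos_of_pos (by positivity)), rpow_neg hn0.le, inv_mul_eq_div,
      le_div_iff₀ (by positivity), mul_comm]
    refine le_trans ?_ this
    gcongr
    linarith
  have h2 : Gamma (B + 1 + n) / Gamma (A + B + 1 + n) ≤ (n:ℝ) ^ (-A) := by
    have := Gamma_ratio_lower (by positivity : (0:ℝ) < B + 1 + n) (by linarith : 1 < A)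
    rw [show B + 1 + (n:ℝ) + A = A + B + 1 + n by ring] at this
    rw [div_le_iff₀ (Gamma_pos_of_pos (by positivity)), rpow_neg hn0.le, inv_mul_eq_div,
      le_div_iff₀ (by positivity), mul_comm]
    refine le_trans ?_ this
    have := Gamma_pos_of_pos (by positivity : (0:ℝ) < B + 1 + n)
    gcongr
    linarith
  have h3 : Gamma A ≤ 2 * Gamma (A + 1) * (A + 1) ^ (-(2/3) : ℝ) := by
    rw [Gamma_add_one hA0.ne']
    have h4 : (A + 1) ^ (-1 : ℝ) ≤ (A + 1) ^ (-(2/3) : ℝ) :=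
      rpow_le_rpow_of_exponent_le (by linarith) (by norm_num)
    rw [rpow_neg_one] at h4
    have h5 : 1 ≤ 2 * A * (A + 1)⁻¹ := by
      rw [← div_eq_mul_inv, le_div_iff₀ (by linarith)]; linarith
    calc Gamma A = Gamma A * 1 := by ring
      _ ≤ Gamma A * (2 * A * (A + 1)⁻¹) := by gcongr
      _ ≤ Gamma A * (2 * A * (A + 1) ^ (-(2/3) : ℝ)) := by gcongr
      _ = _ := by ring
  have h6 : (n:ℝ) ^ (-(2 * A)) = (n:ℝ) ^ (-A) * (n:ℝ) ^ (-A) := by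
    rw [← rpow_add hn0]; congr 1; ring
  have gA1 := Gamma_pos_of_pos (by linarith : 0 < A + 1)
  have gB := Gamma_pos_of_pos (by positivity : 0 < B + 1 + n)
  have gB2 := Gamma_pos_of_pos (by positivity : 0 < A + B + 1 + n)
  rw [h6]
  calc _ ≤ (2 * Gamma (A + 1) * (A + 1) ^ (-(2/3) : ℝ)) * Gamma (A + 1) * (n:ℝ) ^ (-A) * (n:ℝ) ^ (-A) := by
        gcongr
    _ = _ := by ring

lemma jacobiP_one {a b : ℝ} (ha : 0 < a) (hb : 0 < b) (l : ℕ) :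
    jacobiP a b l 1 * jacobiP a b l 1 =
      (2 * l + a + b + 1) / 2 ^ (a + b + 1) *
        (Gamma (l + a + b + 1) * Gamma (l + a + 1) / (Gamma (l + b + 1) * l.factorial * Gamma (a + 1) ^ 2)) := by
  have g1 := Gamma_pos_of_pos (by positivity : 0 < (l:ℝ) + a + b + 1)
  have g2 := Gamma_pos_of_pos (by positivity : 0 < (l:ℝ) + a + 1)
  have g3 := Gamma_pos_of_pos (by positivity : 0 < (l:ℝ) + b + 1)
  have g4 := Gamma_pos_of_pos (by positivity : 0 < a + 1)
  have hsum : ∑ m ∈ Finset.range (l + 1),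
      (l.choose m : ℝ) * (Gamma (a + b + l + m + 1) / Gamma (a + m + 1)) *
        (((1:ℝ) - 1) / 2) ^ m = Gamma (l + a + b + 1) / Gamma (a + 1) := by
    rw [Finset.sum_eq_single_of_mem 0 (by simp)]
    · simp only [Nat.choose_zero_right, Nat.cast_one, Nat.cast_zero, add_zero, pow_zero]
      rw [show a + b + (l:ℝ) + 1 = l + a + b + 1 by ring]; ring
    · intro m _ hm
      simp [hm]
  unfold jacobiP
  rw [hsum, show a + (l:ℝ) + 1 = l + a + 1 by ring, show a + b + (l:ℝ) + 1 = l + a + b + 1 by ring]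
  have hq : 0 ≤ (2 * (l : ℝ) + a + b + 1) / 2 ^ (a + b + 1) *
      (Gamma ((l : ℝ) + a + b + 1) * (l.factorial : ℝ) /
        (Gamma ((l : ℝ) + a + 1) * Gamma ((l : ℝ) + b + 1))) := by positivity
  rw [show ∀ S x y : ℝ, (√S * x * y) * (√S * x * y) = (√S) ^ 2 * (x * y) ^ 2 by intros; ring,
    Real.sq_sqrt hq]
  field_simp

lemma jacobiK_one {a b : ℝ} (ha : 0 < a) (hb : 0 < b) (m : ℕ) :
    jacobiK a b m 1 = 1 / 2 ^ (a + b + 1) / (Gamma (a + 1) * Gamma (a + 2)) *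
      (m * (m + b) * (Gamma (m + a + b + 1) * Gamma (m + a + 1)) / (Gamma (m + b + 1) * m.factorial)) := by
  have g4 := Gamma_pos_of_pos (by positivity : 0 < a + 1)
  have e4 : Gamma (a + 2) = (a + 1) * Gamma (a + 1) := by
    rw [← Gamma_add_one (by positivity)]; congr 1; ring
  induction m with
  | zero => simp [jacobiK]
  | succ m ih =>
    have hK : jacobiK a b (m + 1) 1 = jacobiK a b m 1 + jacobiP a b m 1 * jacobiP a b m 1 := by
      simp [jacobiK, Finset.sum_range_succ]
    have g1 := Gamma_pos_of_pos (by positivity : 0 < (m:ℝ) + a + b + 1)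
    have g2 := Gamma_pos_of_pos (by positivity : 0 < (m:ℝ) + a + 1)
    have g3 := Gamma_pos_of_pos (by positivity : 0 < (m:ℝ) + b + 1)
    rw [hK, ih, jacobiP_one ha hb, e4, Nat.factorial_succ]
    push_cast
    have h1 : Gamma ((m:ℝ) + 1 + a + b + 1) = (m + a + b + 1) * Gamma (m + a + b + 1) := by
      rw [← Gamma_add_one (by positivity)]; congr 1; ring
    have h2 : Gamma ((m:ℝ) + 1 + a + 1) = (m + a + 1) * Gamma (m + a + 1) := by
      rw [← Gamma_add_one (by positivity)]; congr 1; ring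
    have h3 : Gamma ((m:ℝ) + 1 + b + 1) = (m + b + 1) * Gamma (m + b + 1) := by
      rw [← Gamma_add_one (by positivity)]; congr 1; ring
    rw [h1, h2, h3]
    field_simp
    ring

lemma jacobiK_nonneg_bound {a b : ℝ} (hb : 2 ≤ b) (hab : b ≤ a) {m : ℕ} (hm : (a + b) ^ 2 ≤ m) :
    0 ≤ jacobiK a b m 1 ∧ jacobiK a b m 1 ≤
      exp 4 * (1 / 2 ^ (a + b + 1)) / (Gamma (a + 1) * Gamma (a + 2)) * (m:ℝ) ^ (2 * a + 2) := by
  have ha : 0 < a := by linarith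
  have hb0 : 0 < b := by linarith
  have hm0 : (0:ℝ) < m := by nlinarith
  have g4 := Gamma_pos_of_pos (by positivity : 0 < a + 1)
  have g5 := Gamma_pos_of_pos (by positivity : 0 < a + 2)
  have g1 := Gamma_pos_of_pos (by positivity : 0 < (m:ℝ) + a + b + 1)
  have g2 := Gamma_pos_of_pos (by positivity : 0 < (m:ℝ) + a + 1)
  have g3 := Gamma_pos_of_pos (by positivity : 0 < (m:ℝ) + b + 1)
  have g6 := Gamma_pos_of_pos (by positivity : 0 < (m:ℝ) + b)
  have g7 := Gamma_pos_of_pos hm0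
  refine ⟨by rw [jacobiK_one ha hb0]; positivity, ?_⟩
  rw [jacobiK_one ha hb0]
  have hpow : ∀ y : ℝ, 0 ≤ y → y ≤ a + b + 1 → ((m:ℝ) + y) ^ (a + 1) ≤ exp 2 * (m:ℝ) ^ (a + 1) := by
    intro y hy0 hy
    have h1 : (m:ℝ) + y ≤ m * exp (y / m) := by
      have := add_one_le_exp (y / m)
      calc (m:ℝ) + y = m * (y / m + 1) := by field_simp; ring
        _ ≤ _ := mul_le_mul_of_nonneg_left this hm0.le
    refine (rpow_le_rpow (by positivity) h1 (by linarith)).trans ?_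
    rw [mul_rpow hm0.le (exp_pos _).le, mul_comm, ← exp_mul]
    gcongr
    rw [div_mul_eq_mul_div, div_le_iff₀ hm0]
    nlinarith
  have u1 : Gamma (m + a + b + 1) ≤ exp 2 * (m:ℝ) ^ (a + 1) * Gamma (m + b) := by
    have := Gamma_ratio_upper (by positivity : 0 < (m:ℝ) + b) (by linarith : 0 < a + 1)
    rw [show (m:ℝ) + b + (a + 1) = m + (a + b + 1) by ring] at this
    rw [show (m:ℝ) + a + b + 1 = m + (a + b + 1) by ring]
    exact this.trans (mul_le_mul_of_nonneg_right (hpow _ (by positivity) le_rfl) g6.le)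
  have u2 : Gamma (m + a + 1) ≤ exp 2 * (m:ℝ) ^ (a + 1) * Gamma m := by
    have := Gamma_ratio_upper hm0 (by linarith : 0 < a + 1)
    rw [show (m:ℝ) + a + 1 = m + (a + 1) by ring]
    exact this.trans (mul_le_mul_of_nonneg_right (hpow _ (by positivity) (by linarith)) g7.le)
  have e1 : Gamma ((m:ℝ) + b + 1) = (m + b) * Gamma (m + b) := Gamma_add_one (by positivity)
  have e2 : (m.factorial : ℝ) = m * Gamma m := by
    rw [← Gamma_nat_eq_factorial, Gamma_add_one hm0.ne']
  have e3 : (m:ℝ) ^ (2 * a + 2) = (m:ℝ) ^ (a + 1) * (m:ℝ) ^ (a + 1) := by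
    rw [← rpow_add hm0]; congr 1; ring
  have e5 : exp 4 = exp 2 * exp 2 := by rw [← exp_add]; norm_num
  rw [e1, e2, e3, e5]
  calc _ ≤ 1 / 2 ^ (a + b + 1) / (Gamma (a + 1) * Gamma (a + 2)) *
      (m * (m + b) * ((exp 2 * (m:ℝ) ^ (a + 1) * Gamma (m + b)) * (exp 2 * (m:ℝ) ^ (a + 1) * Gamma m)) /
        ((m + b) * Gamma (m + b) * (m * Gamma m))) := by gcongr
    _ = _ := by field_simp

lemma jacobiP_ratio {A B : ℝ} (hA : 0 < A) (hB : 0 < B) (n : ℕ) (t : ℝ) :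
    jacobiP A B n (1 - 2 * t) / jacobiP A B n 1 = (jY A B n).eval t := by
  have g1 := Gamma_pos_of_pos (by positivity : 0 < (n:ℝ) + A + B + 1)
  have g2 := Gamma_pos_of_pos (by positivity : 0 < (n:ℝ) + A + 1)
  have g3 := Gamma_pos_of_pos (by positivity : 0 < (n:ℝ) + B + 1)
  have g4 := Gamma_pos_of_pos (by positivity : 0 < A + 1)
  have g5 := Gamma_pos_of_pos (by positivity : 0 < A + n + 1)
  have g6 := Gamma_pos_of_pos (by positivity : 0 < A + B + n + 1)
  obtain ⟨C, hC0, hC⟩ : ∃ C : ℝ, C ≠ 0 ∧ ∀ t, jacobiP A B n (1 - 2 * t) = C * (jY A B n).eval t := by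
    have hq : 0 < (2 * (n : ℝ) + A + B + 1) / 2 ^ (A + B + 1) *
      (Gamma ((n : ℝ) + A + B + 1) * (n.factorial : ℝ) /
        (Gamma ((n : ℝ) + A + 1) * Gamma ((n : ℝ) + B + 1))) := by positivity
    have hs := Real.sqrt_pos.mpr hq
    refine ⟨√((2 * (n : ℝ) + A + B + 1) / 2 ^ (A + B + 1) *
      (Gamma ((n : ℝ) + A + B + 1) * (n.factorial : ℝ) /
        (Gamma ((n : ℝ) + A + 1) * Gamma ((n : ℝ) + B + 1)))) *
      (Gamma (A + n + 1) / ((n.factorial : ℝ) * Gamma (A + B + n + 1))) *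
      (Gamma (A + B + n + 1) / Gamma (A + 1)), by positivity, fun t => ?_⟩
    unfold jacobiP
    rw [mul_assoc _ (Gamma (A + B + n + 1) / Gamma (A + 1))]
    congr 1
    rw [jY_eval, Finset.mul_sum]
    refine Finset.sum_congr rfl fun j _ => ?_
    rw [jb, show (1 - 2 * t - 1) / 2 = -1 * t by ring, mul_pow,
      show A + B + 1 + (n:ℝ) = A + B + n + 1 by ring,
      show A + B + (n:ℝ) + 1 + j = A + B + n + j + 1 by ring, show A + 1 + (j:ℝ) = A + j + 1 by ring]
    field_simp
  have h1 := hC 0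
  rw [mul_zero, sub_zero] at h1
  have h2 : (jY A B n).eval 0 = 1 := by
    rw [← Polynomial.coeff_zero_eq_eval_zero, jY_coeff, jb_zero hA hB]
  rw [hC, h1, h2]
  field_simp

lemma integral_le_jN {a b r s : ℝ} (n : ℕ) (hb : 2 ≤ b) (hab : b ≤ a) (hs : -1 < s) (hsr : s ≤ r) :
    ∫ x in (-1 : ℝ)..1,
      (jacobiP (a + r + 1) (b - 1) n x / jacobiP (a + r + 1) (b - 1) n 1) ^ 2 *
        (1 - x) ^ (s + a) * (1 + x) ^ b ≤
      2 ^ (s + a + b + 1) * jN (a + r + 1) (b - 1) n (r - s) := by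
  set A := a + r + 1 with hA
  set B := b - 1 with hB
  have hA0 : 0 < A := by linarith
  have hB0 : 0 < B := by linarith
  have hcv := intervalIntegral.integral_comp_sub_mul (a := 0) (b := 1)
    (fun x : ℝ => (jacobiP A B n x / jacobiP A B n 1) ^ 2 * (1 - x) ^ (s + a) * (1 + x) ^ b)
    (two_ne_zero : (2:ℝ) ≠ 0) 1
  rw [show (1:ℝ) - 2 * 1 = -1 by norm_num, show (1:ℝ) - 2 * 0 = 1 by norm_num, smul_eq_mul] at hcv
  have hcv2 : ∫ x in (-1 : ℝ)..1,
      (jacobiP A B n x / jacobiP A B n 1) ^ 2 * (1 - x) ^ (s + a) * (1 + x) ^ b =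
      2 * ∫ t in (0:ℝ)..1, (jacobiP A B n (1 - 2 * t) / jacobiP A B n 1) ^ 2 *
        (1 - (1 - 2 * t)) ^ (s + a) * (1 + (1 - 2 * t)) ^ b := by
    rw [hcv]; ring
  rw [hcv2, jN, rpow_add_one two_ne_zero, mul_comm ((2:ℝ) ^ (s + a + b)) 2, mul_assoc,
    ← intervalIntegral.integral_const_mul ((2:ℝ) ^ (s + a + b))]
  refine mul_le_mul_of_nonneg_left ?_ (by norm_num : (0:ℝ) ≤ 2)
  simp only [jacobiP_ratio hA0 hB0]
  have hcu := jN_integrand_cont A B n (v := r - s) hB0.le (by linarith)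
  apply intervalIntegral.integral_mono_on_of_le_Ioo zero_le_one
  · apply Continuous.intervalIntegrable
    refine ((((jY A B n).continuous).pow 2).mul ?_).mul ?_
    · exact (by fun_prop : Continuous fun t : ℝ => 1 - (1 - 2 * t)).rpow_const fun _ => Or.inr (by linarith)
    · exact (by fun_prop : Continuous fun t : ℝ => 1 + (1 - 2 * t)).rpow_const fun _ => Or.inr (by linarith)
  · exact (hcu.const_mul _).intervalIntegrable _ _
  · intro t ht
    have ht0 := ht.1
    have ht1 : 0 < 1 - t := by linarith [ht.2]
    rw [show 1 - (1 - 2 * t) = 2 * t by ring, show 1 + (1 - 2 * t) = 2 * (1 - t) by ring,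
      mul_rpow zero_le_two ht0.le, mul_rpow zero_le_two ht1.le, rpow_add zero_lt_two (s + a) b,
      show A - 1 - (r - s) = s + a by rw [hA]; ring]
    have h1 : (1 - t) ^ b ≤ (1 - t) ^ B :=
      rpow_le_rpow_of_exponent_ge ht1 (by linarith) (by linarith)
    have h2 : 0 ≤ t ^ (s + a) := rpow_nonneg ht0.le _
    calc _ ≤ (jY A B n).eval t ^ 2 * (2 ^ (s + a) * t ^ (s + a)) * (2 ^ b * (1 - t) ^ B) := by gcongr
      _ = _ := by ring


/-- Bound for `K_m^{(α,β)}(1)` times the weighted `L²` integral of the normalized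
Jacobi polynomial `p_n^{(α+r+1,β−1)}`. -/
theorem jacobiK_mul_sq_integral_bound :
    ∃ c : ℝ, 0 < c ∧
      ∀ (α β r s : ℝ) (n m : ℕ), 2 ≤ β → β ≤ α → -1 < s → s ≤ r →
        (2 * α + r + 1) ^ 2 ≤ (n : ℝ) → (α + β) ^ 2 ≤ (m : ℝ) →
        jacobiK α β m 1 *
            ∫ x in (-1 : ℝ)..1,
              (jacobiP (α + r + 1) (β - 1) n x / jacobiP (α + r + 1) (β - 1) n 1) ^ 2 *
                (1 - x) ^ (s + α) * (1 + x) ^ β ≤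
          c * Real.exp (2 * r - 2 * s) * 2 ^ s * ((m : ℝ) / n) ^ (2 * α + 2 * s + 2) *
            (m : ℝ) ^ (-(2 * s)) *
            (Real.Gamma (α + r + 2) ^ 2 / (Real.Gamma (α + 1) * Real.Gamma (α + 2))) *
            (α + r + 2) ^ (2 * s - 2 * r - 2/3) := by
  refine ⟨26 * exp 14, by positivity, ?_⟩
  intro α β r s n m hβ hαβ hs hsr hn hm
  have hn0 : (0:ℝ) < n := by nlinarith
  have hm0 : (0:ℝ) < m := by nlinarith
  have hn1 : 1 ≤ n := by exact_mod_cast hn0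
  have hA : 2 ≤ α + r + 1 := by linarith
  have hA2 : 0 < α + r + 2 := by linarith
  obtain ⟨hK0, hK⟩ := jacobiK_nonneg_bound hβ hαβ hm
  have hI := integral_le_jN n hβ hαβ hs hsr
  have hN := jN_bound hA (by linarith : 0 < β - 1) n (by linarith : 1 ≤ 2 * α + r + 1) (by linarith) hn
    (by linarith : 0 ≤ r - s) (by linarith)
  have hZ := jN_zero_bound hA (by linarith : 0 < β - 1) hn1
  have g1 := Gamma_pos_of_pos (by linarith : 0 < α + 1)
  have g2 := Gamma_pos_of_pos (by linarith : 0 < α + 2)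
  have g3 := Gamma_pos_of_pos hA2
  rw [show α + r + 1 + 1 = α + r + 2 by ring] at hN hZ
  have hNZ := hN.trans (mul_le_mul_of_nonneg_left hZ (by positivity))
  have hI2 := hI.trans (mul_le_mul_of_nonneg_left hNZ (by positivity))
  have hKI := mul_le_mul_of_nonneg_left hI2 hK0
  refine hKI.trans ((mul_le_mul_of_nonneg_right hK (by positivity)).trans (le_of_eq ?_))
  have p1 : (2:ℝ) ^ (s + α + β + 1) = 2 ^ s * 2 ^ (α + β + 1) := by
    rw [← rpow_add zero_lt_two]; congr 1; ring
  have p2 : ((m : ℝ) / n) ^ (2 * α + 2 * s + 2) * (m : ℝ) ^ (-(2 * s)) =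
      (m:ℝ) ^ (2 * α + 2) * ((n:ℝ) ^ (2 * (r - s)) * (n:ℝ) ^ (-(2 * (α + r + 1)))) := by
    have q : (m:ℝ) ^ (2 * α + 2) = (m:ℝ) ^ (2 * α + 2 * s + 2) * (m:ℝ) ^ (-(2 * s)) := by
      rw [← rpow_add hm0]; congr 1; ring
    have q2 : (n:ℝ) ^ (2 * (r - s)) * (n:ℝ) ^ (-(2 * (α + r + 1))) =
        ((n:ℝ) ^ (2 * α + 2 * s + 2))⁻¹ := by
      rw [← rpow_add hn0, ← rpow_neg hn0.le]; congr 1; ring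
    rw [div_rpow hm0.le hn0.le, q, q2]; ring
  have p3 : (α + r + 2) ^ (2 * s - 2 * r - 2/3) =
      (α + r + 2) ^ (-(2 * (r - s))) * (α + r + 2) ^ (-(2/3) : ℝ) := by
    rw [← rpow_add hA2]; congr 1; ring
  have p4 : exp 14 = exp 4 * exp 10 := by rw [← exp_add]; norm_num
  rw [p1, p3, p4, show 2 * r - 2 * s = 2 * (r - s) by ring,
    mul_assoc _ (((m : ℝ) / n) ^ (2 * α + 2 * s + 2)), p2]
  have : (2:ℝ) ^ (α + β + 1) ≠ 0 := by positivity
  field_simp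
  ring
end
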